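/- Let K be the reference tetrahedron in ℝ³ and let p ≥ 1 be an integer. Let Σ = {Φ ∈ (P_p)³ : Φ·n = 0 on ∂K} be the space of vector polynomials of degree at most p whose normal component vanishes on each face of K. Then the image of Σ under the divergence operator equals the space of polynomials of degree at most p−1 with zero mean over K, i.e. {div Φ : Φ ∈ Σ} = {q ∈ P_{p−1} : ∫_K q dx = 0}. -/

import Mathlib

open MeasureTheory MvPolynomial Real

noncomputable section

/-- Vertices of the reference tetrahedron: v0=(0,0,0), v1=(1,0,0), v2=(0,1,0), v3=(0,0,1). -/
def vtx : Fin 4 → Fin 3 → ℝ :=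
  ![![0,0,0], ![1,0,0], ![0,1,0], ![0,0,1]]

/-- Barycentric coordinates λ₀ = 1-x-y-z, λ₁ = x, λ₂ = y, λ₃ = z. -/
def lam : Fin 4 → (Fin 3 → ℝ) → ℝ :=
  ![fun x => 1 - x 0 - x 1 - x 2, fun x => x 0, fun x => x 1, fun x => x 2]

/-- The reference tetrahedron K = {x : λ_j(x) ≥ 0 for all j}. -/
def Ktet : Set (Fin 3 → ℝ) := {x | ∀ j : Fin 4, 0 ≤ lam j x}

/-- Face F_j = {x ∈ K : λ_j(x) = 0}. -/
def faceK (j : Fin 4) : Set (Fin 3 → ℝ) := {x ∈ Ktet | lam j x = 0}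

/-- Outward unit normals of the four faces of K. -/
def normalK : Fin 4 → Fin 3 → ℝ :=
  ![fun _ => 1 / Real.sqrt 3, ![-1,0,0], ![0,-1,0], ![0,0,-1]]

/-- (Constant) gradients of the barycentric coordinates. -/
def gradLam : Fin 4 → Fin 3 → ℝ :=
  ![![-1,-1,-1], ![1,0,0], ![0,1,0], ![0,0,1]]

/-- Divergence of a vector polynomial. -/
def divP (Φ : Fin 3 → MvPolynomial (Fin 3) ℝ) : MvPolynomial (Fin 3) ℝ :=
  ∑ i, MvPolynomial.pderiv i (Φ i)

/-- The normal component of the vector polynomial Φ vanishes on every face of K. -/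
def normalVanish (Φ : Fin 3 → MvPolynomial (Fin 3) ℝ) : Prop :=
  ∀ j : Fin 4, ∀ q ∈ faceK j, ∑ i, MvPolynomial.eval q (Φ i) * normalK j i = 0

/-- Divergence of a vector field (as a function). -/
def divF (Φ : (Fin 3 → ℝ) → (Fin 3 → ℝ)) (x : Fin 3 → ℝ) : ℝ :=
  ∑ i, fderiv ℝ Φ x (Pi.single i 1) i

/-- The normal component of the vector field Φ vanishes on every face of K. -/
def normalVanishF (Φ : (Fin 3 → ℝ) → (Fin 3 → ℝ)) : Prop :=
  ∀ j : Fin 4, ∀ q ∈ faceK j, ∑ i, Φ q i * normalK j i = 0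

/-!
Let `λ₀ = 1 - ∑ i, X i`. The normal component of `Φ` vanishes on the boundary of the simplex
exactly when `X i ∣ Φ i` for all `i` and `λ₀ ∣ ∑ i, Φ i`. Such a `Φ` is the sum of a bubble field,
with components `λ₀ X i G i`, and of edge fields `X i X j h (eᵢ - eⱼ)`; an edge field differs from
a bubble field by a divergence-free field. Fubini's theorem and the fundamental theorem of calculus
show that the divergence of a bubble field has mean zero.

Conversely, modulo divergences of bubble fields, `λ₀ X^a` is a multiple of `X^a`, and `X i X^a` is
a multiple of `λ₀ X^a`. So every polynomial of degree at most `p - 1` is a constant plus the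
divergence of a field in `Σ`, and the constant is zero if the polynomial has mean zero.
-/

theorem totalDegree_pderiv_le {σ R : Type*} [CommSemiring R] (i : σ) (f : MvPolynomial σ R) :
    (pderiv i f).totalDegree ≤ f.totalDegree - 1 := by
  rw [totalDegree, Finset.sup_le_iff]
  intro m hm
  rw [mem_support_iff, coeff_pderiv] at hm
  have hle := le_totalDegree (mem_support_iff.2 (left_ne_zero_of_mul hm))
  rw [Finsupp.sum_add_index' (by simp) (by simp), Finsupp.sum_single_index rfl] at hle
  omega

theorem pderiv_pderiv_comm {σ R : Type*} [CommRing R] (i j : σ) (f : MvPolynomial σ R) :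
    pderiv i (pderiv j f) = pderiv j (pderiv i f) := by
  classical
  let D (k : σ) : Derivation R (MvPolynomial σ R) (MvPolynomial σ R) := pderiv k
  have hcomm : ⁅D i, D j⁆ = 0 := by
    refine derivation_ext fun k ↦ ?_
    simp only [D, Derivation.commutator_apply, pderiv_X, Pi.single_apply, Derivation.zero_apply]
    split_ifs <;> simp
  simpa [D, Derivation.commutator_apply, sub_eq_zero] using DFunLike.congr_fun hcomm f

theorem X_sub_dvd_of_eval_update_eq_zero {σ R : Type*} [DecidableEq σ] [CommRing R] [IsDomain R]
    {i : σ} {r f : MvPolynomial σ R} (s : σ → Set R) (hs : ∀ j, (s j).Infinite)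
    (hf : ∀ x ∈ Set.univ.pi s, eval (Function.update x i (eval x r)) f = 0) : X i - r ∣ f := by
  have hsubst : bind₁ (Function.update X i r) f = 0 := by
    refine funext_set s hs fun x hx ↦ ?_
    have hupdate : (fun j ↦ eval x (Function.update X i r j)) =
        Function.update x i (eval x r) := by
      ext j
      obtain rfl | hj := eq_or_ne j i <;> simp [*]
    rw [map_zero, ← hf x hx, ← hupdate]
    exact eval₂Hom_bind₁ _ _ _ _
  let J : Ideal (MvPolynomial σ R) := Ideal.span {X i - r}
  have hmod : (Ideal.Quotient.mkₐ R J).comp (bind₁ (Function.update X i r)) =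
      Ideal.Quotient.mkₐ R J := by
    ext j
    obtain rfl | hj := eq_or_ne j i
    · simpa using (Ideal.Quotient.eq.2 (Ideal.mem_span_singleton_self (X j - r))).symm
    · simp [hj]
  rw [← Ideal.mem_span_singleton, ← Ideal.Quotient.eq_zero_iff_mem]
  rw [← Ideal.Quotient.mkₐ_eq_mk R, ← hmod, AlgHom.comp_apply, hsubst, map_zero]

theorem hasDerivAt_eval_update {σ 𝕜 : Type*} [DecidableEq σ] [NontriviallyNormedField 𝕜]
    (f : MvPolynomial σ 𝕜) (x : σ → 𝕜) (i : σ) (t : 𝕜) :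
    HasDerivAt (fun t ↦ eval (Function.update x i t) f)
      (eval (Function.update x i t) (pderiv i f)) t := by
  induction f using MvPolynomial.induction_on with
  | C a => simpa using hasDerivAt_const t a
  | add p q hp hq =>
    simp only [map_add]
    exact hp.add hq
  | mul_X p j hp =>
    have hX : HasDerivAt (fun t ↦ Function.update x i t j)
        (eval (Function.update x i t) (pderiv i (X j))) t := by
      obtain rfl | hj := eq_or_ne j i
      · simpa using hasDerivAt_id' t
      · simpa [hj] using hasDerivAt_const t (x j)
    simp only [pderiv_mul, map_add, map_mul, eval_X]
    exact hp.mul hX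

section Bubble

variable {σ R : Type*} [Fintype σ] [CommRing R]

/-- The barycentric coordinate `λ₀ = 1 - ∑ i, X i` of the reference simplex at the origin; those at
the other vertices are the variables `X i`. -/
def originCoord (σ R : Type*) [Fintype σ] [CommRing R] : MvPolynomial σ R := 1 - ∑ i, X i

@[simp]
theorem eval_originCoord (x : σ → R) : eval x (originCoord σ R) = 1 - ∑ i, x i := by
  simp [originCoord]

@[simp]
theorem pderiv_originCoord (i : σ) : pderiv i (originCoord σ R) = -1 := by
  classical simp [originCoord, Pi.single_apply]

theorem totalDegree_originCoord_le [Nontrivial R] : (originCoord σ R).totalDegree ≤ 1 := by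
  refine (totalDegree_sub _ _).trans (max_le (by simp) ?_)
  exact totalDegree_finsetSum_le fun i _ ↦ by simp

/-- The divergence of vector polynomials, as a linear map. -/
def divergence (σ R : Type*) [Fintype σ] [CommRing R] :
    (σ → MvPolynomial σ R) →ₗ[R] MvPolynomial σ R :=
  ∑ i, (pderiv i).toLinearMap ∘ₗ LinearMap.proj i

theorem divergence_apply (Φ : σ → MvPolynomial σ R) :
    divergence σ R Φ = ∑ i, pderiv i (Φ i) := by
  simp [divergence]

/-- The vector polynomial with components `λ₀ X i G i`. Its normal component vanishes on the
boundary of the reference simplex because its `i`-th component vanishes on both faces whose normal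
is not orthogonal to the `i`-th axis. -/
def bubbleField (G : σ → MvPolynomial σ R) (i : σ) : MvPolynomial σ R :=
  originCoord σ R * (X i * G i)

/-- For `i ≠ j` and `u = λ₀ X i X j h`, the bubble field on the right minus the edge field
`X i X j h (eᵢ - eⱼ)` on the left has components `∂ⱼ u` and `-∂ᵢ u`, so it is divergence-free. -/
theorem pderiv_X_mul_X_mul_sub (i j : σ) (h : MvPolynomial σ R) :
    pderiv i (X i * X j * h) - pderiv j (X i * X j * h) =
      pderiv i (originCoord σ R * (X i * pderiv j (X j * h))) -
        pderiv j (originCoord σ R * (X j * pderiv i (X i * h))) := by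
  obtain rfl | hij := eq_or_ne i j
  · simp
  · simp only [pderiv_mul, map_add, pderiv_X_self, pderiv_X_of_ne hij, pderiv_X_of_ne hij.symm,
      pderiv_originCoord, pderiv_pderiv_comm j i h, pderiv_one]
    ring

theorem exists_divergence_eq_divergence_bubbleField {Φ : σ → MvPolynomial σ R}
    (hX : ∀ i, X i ∣ Φ i) (hsum : originCoord σ R ∣ ∑ i, Φ i) :
    ∃ G, divergence σ R Φ = divergence σ R (bubbleField G) := by
  choose ψ hψ using hX
  obtain ⟨χ, hχ⟩ := hsum
  -- `X i ψᵢ = λ₀ X i ψᵢ + ∑ j, X j (X i ψᵢ)`, and `∑ j, X j ψⱼ` is divisible by `λ₀`.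
  have hsplit (i : σ) : Φ i = originCoord σ R * (X i * (ψ i + χ)) +
      ∑ j, (X i * X j * ψ i - X j * X i * ψ j) := by
    have hswap : ∑ j, X j * X i * ψ j = X i * (originCoord σ R * χ) := by
      rw [← hχ, Finset.mul_sum]
      exact Finset.sum_congr rfl fun j _ ↦ by rw [hψ j]; ring
    rw [Finset.sum_sub_distrib, hswap, ← Finset.sum_mul, ← Finset.mul_sum, hψ i, originCoord]
    ring
  have hedge : ∑ i, ∑ j, pderiv i (X i * X j * ψ i - X j * X i * ψ j) =
      ∑ i, ∑ j, pderiv i (originCoord σ R *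
        (X i * (pderiv j (X j * ψ i) - pderiv j (X j * ψ j)))) := by
    simp only [mul_sub, map_sub, Finset.sum_sub_distrib]
    rw [Finset.sum_comm (f := fun i j ↦ pderiv i (X j * X i * ψ j)),
      Finset.sum_comm (f := fun i j ↦ pderiv i (originCoord σ R * (X i * pderiv j (X j * ψ j))))]
    simp only [← Finset.sum_sub_distrib, pderiv_X_mul_X_mul_sub]
  refine ⟨fun i ↦ ψ i + χ + ∑ j, (pderiv j (X j * ψ i) - pderiv j (X j * ψ j)), ?_⟩
  simp only [divergence_apply, bubbleField]
  conv_lhs => enter [2, i]; rw [hsplit i]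
  simp only [map_add, map_sum, Finset.sum_add_distrib, hedge, mul_add, Finset.mul_sum]

theorem pderiv_originCoord_mul_X_mul_monomial (i : σ) (a : σ →₀ ℕ) :
    pderiv i (originCoord σ R * (X i * monomial a 1)) =
      (a i + 1 : R) • (originCoord σ R * monomial a 1) - X i * monomial a 1 := by
  rw [pderiv_mul, pderiv_mul, pderiv_X_self, pderiv_originCoord, X_mul_pderiv_monomial,
    add_smul, Nat.cast_smul_eq_nsmul, one_smul, mul_add, mul_smul_comm]
  ring

theorem sum_pderiv_originCoord_mul_X_mul_monomial (a : σ →₀ ℕ) :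
    ∑ i, pderiv i (originCoord σ R * (X i * monomial a 1)) =
      (a.degree + Fintype.card σ + 1 : R) • (originCoord σ R * monomial a 1) - monomial a 1 := by
  have hX : ∑ i, X i = 1 - originCoord σ R := by rw [originCoord, sub_sub_cancel]
  have hdegree : (a.degree : R) = ∑ i, (a i : R) := by simp [Finsupp.degree_eq_sum]
  simp only [pderiv_originCoord_mul_X_mul_monomial, Finset.sum_sub_distrib, ← Finset.sum_smul,
    ← Finset.sum_mul, hX, Finset.sum_add_distrib, hdegree, Finset.sum_const,
    Finset.card_univ, nsmul_eq_mul, mul_one, sub_mul, one_mul]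
  module

end Bubble

theorem monomial_mem_of_pderiv_bubble_mem {σ K : Type*} [Fintype σ] [Field K] [CharZero K]
    {W : Submodule K (MvPolynomial σ K)} {d : ℕ} (h1 : 1 ∈ W)
    (hW : ∀ (a : σ →₀ ℕ) (i : σ), a.degree < d →
      pderiv i (originCoord σ K * (X i * monomial a 1)) ∈ W)
    (a : σ →₀ ℕ) (ha : a.degree ≤ d) : monomial a 1 ∈ W := by
  induction hn : a.degree generalizing a with
  | zero => rwa [(Finsupp.degree_eq_zero_iff a).1 hn]
  | succ n ih =>
    obtain ⟨i, hi⟩ : ∃ i, a i ≠ 0 := by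
      contrapose! hn
      simp [Finsupp.degree_eq_sum, hn]
    obtain ⟨b, rfl⟩ : ∃ b, a = b + Finsupp.single i 1 :=
      ⟨a - Finsupp.single i 1, (Finsupp.sub_add_single_one_cancel hi).symm⟩
    rw [map_add, Finsupp.degree_single] at hn ha
    have hbubble (j : σ) := hW b j (by omega)
    have horigin : originCoord σ K * monomial b 1 ∈ W := by
      have hsum := W.sum_mem fun j (_ : j ∈ Finset.univ) ↦ hbubble j
      rw [sum_pderiv_originCoord_mul_X_mul_monomial,
        W.sub_mem_iff_left (ih b (by omega) (by omega))] at hsum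
      exact (W.smul_mem_iff (by norm_cast)).1 hsum
    have hXb := hbubble i
    rw [pderiv_originCoord_mul_X_mul_monomial, W.sub_mem_iff_right (W.smul_mem _ horigin)] at hXb
    rwa [monomial_add_single, pow_one, mul_comm]

/-- The reference simplex in `ι → ℝ`, spanned by the origin and the standard basis vectors. -/
def cornerSimplex (ι : Type*) [Fintype ι] : Set (ι → ℝ) := {x | (∀ i, 0 ≤ x i) ∧ ∑ i, x i ≤ 1}

section CornerSimplex

variable {ι : Type*} [Fintype ι]

theorem isCompact_cornerSimplex : IsCompact (cornerSimplex ι) := by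
  refine (isCompact_Icc (a := (0 : ι → ℝ)) (b := 1)).of_isClosed_subset ?_ fun x hx ↦
    ⟨hx.1, fun i ↦ (Finset.single_le_sum (fun j _ ↦ hx.1 j) (Finset.mem_univ i)).trans hx.2⟩
  have hsum : Continuous fun x : ι → ℝ ↦ ∑ i, x i := by fun_prop
  exact (isClosed_Ici (a := (0 : ι → ℝ))).inter (isClosed_le hsum continuous_const)

theorem pi_Icc_subset_cornerSimplex :
    Set.univ.pi (fun _ ↦ Set.Icc 0 (Fintype.card ι : ℝ)⁻¹) ⊆ cornerSimplex ι := by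
  refine fun x hx ↦ ⟨fun i ↦ (hx i trivial).1, ?_⟩
  calc ∑ i, x i ≤ ∑ _i : ι, (Fintype.card ι : ℝ)⁻¹ :=
        Finset.sum_le_sum fun i _ ↦ (hx i trivial).2
    _ ≤ 1 := by simpa using mul_inv_le_one

theorem volume_cornerSimplex_pos : 0 < volume.real (cornerSimplex ι) := by
  refine ENNReal.toReal_pos ?_ isCompact_cornerSimplex.measure_lt_top.ne
  refine (lt_of_lt_of_le ?_ (measure_mono pi_Icc_subset_cornerSimplex)).ne'
  rw [volume_pi_pi, pos_iff_ne_zero, Finset.prod_ne_zero_iff]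
  intro i _
  simp [Fintype.card_pos_iff.2 ⟨i⟩]

theorem integrableOn_eval_cornerSimplex (f : MvPolynomial ι ℝ) :
    IntegrableOn (fun x ↦ eval x f) (cornerSimplex ι) :=
  f.continuous_eval.continuousOn.integrableOn_compact isCompact_cornerSimplex

theorem update_zero_mem_cornerSimplex [DecidableEq ι] {x : ι → ℝ} (hx : x ∈ cornerSimplex ι)
    (i : ι) : Function.update x i 0 ∈ cornerSimplex ι := by
  have hle : Function.update x i 0 ≤ x := update_le_self_iff.2 (hx.1 i)
  exact ⟨le_update_iff.2 ⟨le_rfl, fun j _ ↦ hx.1 j⟩,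
    (Finset.sum_le_sum fun j _ ↦ hle j).trans hx.2⟩

theorem sum_update_one_sub_sum_erase [DecidableEq ι] (x : ι → ℝ) (i : ι) :
    ∑ j, Function.update x i (1 - ∑ k ∈ Finset.univ.erase i, x k) j = 1 := by
  rw [Finset.sum_update_of_mem (Finset.mem_univ i), ← Finset.erase_eq, sub_add_cancel]

theorem update_one_sub_sum_erase_mem_cornerSimplex [DecidableEq ι] {x : ι → ℝ}
    (hx : x ∈ cornerSimplex ι) (i : ι) :
    Function.update x i (1 - ∑ j ∈ Finset.univ.erase i, x j) ∈ cornerSimplex ι := by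
  refine ⟨le_update_iff.2 ⟨?_, fun j _ ↦ hx.1 j⟩, (sum_update_one_sub_sum_erase x i).le⟩
  have herase : ∑ j ∈ Finset.univ.erase i, x j ≤ ∑ j, x j :=
    Finset.sum_le_sum_of_subset_of_nonneg (Finset.erase_subset i _) fun j _ _ ↦ hx.1 j
  exact sub_nonneg.2 (herase.trans hx.2)

end CornerSimplex

theorem insertNth_mem_cornerSimplex_iff {n : ℕ} (i : Fin (n + 1)) {t : ℝ} {y : Fin n → ℝ} :
    (i.insertNth t y : Fin (n + 1) → ℝ) ∈ cornerSimplex (Fin (n + 1)) ↔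
      y ∈ cornerSimplex (Fin n) ∧ t ∈ Set.Icc 0 (1 - ∑ j, y j) := by
  simp only [cornerSimplex, Set.mem_ofPred_eq, Fin.sum_univ_succAbove _ i,
    Fin.forall_iff_succAbove i, Fin.insertNth_apply_same, Fin.insertNth_apply_succAbove,
    Set.mem_Icc]
  constructor
  · rintro ⟨⟨ht, hy⟩, hsum⟩
    exact ⟨⟨hy, by linarith⟩, ht, by linarith⟩
  · rintro ⟨⟨hy, -⟩, ht, hsum⟩
    exact ⟨⟨ht, hy⟩, by linarith⟩

theorem setIntegral_cornerSimplex_succ {E : Type*} [NormedAddCommGroup E] [NormedSpace ℝ E]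
    {n : ℕ} (i : Fin (n + 1)) {f : (Fin (n + 1) → ℝ) → E}
    (hf : IntegrableOn f (cornerSimplex (Fin (n + 1)))) :
    ∫ x in cornerSimplex (Fin (n + 1)), f x =
      ∫ y in cornerSimplex (Fin n), ∫ t in (0 : ℝ)..(1 - ∑ j, y j), f (i.insertNth t y) := by
  have hmeas (m : ℕ) : MeasurableSet (cornerSimplex (Fin m)) :=
    isCompact_cornerSimplex.measurableSet
  let e := MeasurableEquiv.piFinSuccAbove (fun _ : Fin (n + 1) ↦ ℝ) i
  have he : MeasurePreserving e.symm := (volume_preserving_piFinSuccAbove (fun _ ↦ ℝ) i).symm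
  have hslice (y : Fin n → ℝ) (t : ℝ) :
      (cornerSimplex (Fin (n + 1))).indicator f (i.insertNth t y) =
        (cornerSimplex (Fin n)).indicator (fun y ↦ (Set.Icc 0 (1 - ∑ j, y j)).indicator
          (fun t ↦ f (i.insertNth t y)) t) y := by
    classical
    simp only [Set.indicator_apply]
    rw [if_congr (insertNth_mem_cornerSimplex_iff i) rfl rfl, ite_and]
  calc ∫ x in cornerSimplex (Fin (n + 1)), f x
      = ∫ z, (cornerSimplex (Fin (n + 1))).indicator f (e.symm z) := by
        rw [he.integral_comp', integral_indicator (hmeas _)]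
    _ = ∫ y, ∫ t, (cornerSimplex (Fin (n + 1))).indicator f (i.insertNth t y) :=
        integral_prod_symm _ (he.integrable_comp_of_integrable (hf.integrable_indicator (hmeas _)))
    _ = ∫ y in cornerSimplex (Fin n), ∫ t in Set.Icc 0 (1 - ∑ j, y j), f (i.insertNth t y) := by
        simp only [hslice, ← integral_indicator (hmeas n), ← integral_indicator measurableSet_Icc]
        congr with y
        by_cases hy : y ∈ cornerSimplex (Fin n) <;> simp [hy]
    _ = ∫ y in cornerSimplex (Fin n), ∫ t in (0 : ℝ)..(1 - ∑ j, y j), f (i.insertNth t y) := by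
        refine setIntegral_congr_fun (hmeas n) fun y hy ↦ ?_
        simp only [intervalIntegral.integral_of_le (sub_nonneg.2 hy.2),
          integral_Icc_eq_integral_Ioc]

theorem integral_pderiv_eq_zero {n : ℕ} {i : Fin n} {f : MvPolynomial (Fin n) ℝ}
    (hbot : ∀ x ∈ cornerSimplex (Fin n), x i = 0 → eval x f = 0)
    (htop : ∀ x ∈ cornerSimplex (Fin n), ∑ j, x j = 1 → eval x f = 0) :
    ∫ x in cornerSimplex (Fin n), eval x (pderiv i f) = 0 := by
  obtain _ | n := n
  · exact i.elim0
  rw [setIntegral_cornerSimplex_succ i (integrableOn_eval_cornerSimplex _)]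
  refine setIntegral_eq_zero_of_forall_eq_zero fun y hy ↦ ?_
  have hheight : 0 ≤ 1 - ∑ j, y j := sub_nonneg.2 hy.2
  have hderiv (t : ℝ) : HasDerivAt (fun t ↦ eval (i.insertNth t y) f)
      (eval (i.insertNth t y) (pderiv i f)) t := by
    simpa only [Fin.update_insertNth] using hasDerivAt_eval_update f (i.insertNth 0 y) i t
  have hcont : Continuous fun t : ℝ ↦ eval (i.insertNth t y) (pderiv i f) :=
    (continuous_eval _).comp
      (Continuous.finInsertNth (A := fun _ ↦ ℝ) i continuous_id continuous_const)
  rw [intervalIntegral.integral_eq_sub_of_hasDerivAt (fun t _ ↦ hderiv t)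
    (hcont.intervalIntegrable _ _), htop, hbot, sub_zero]
  · exact (insertNth_mem_cornerSimplex_iff i).2 ⟨hy, le_rfl, hheight⟩
  · exact Fin.insertNth_apply_same ..
  · exact (insertNth_mem_cornerSimplex_iff i).2 ⟨hy, hheight, le_rfl⟩
  · simp [Fin.sum_univ_succAbove _ i]

/-- Integration over the reference simplex, as a linear functional on polynomials. -/
def simplexIntegral (ι : Type*) [Fintype ι] : MvPolynomial ι ℝ →ₗ[ℝ] ℝ where
  toFun f := ∫ x in cornerSimplex ι, eval x f
  map_add' f g := by
    simpa only [map_add] using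
      integral_add (integrableOn_eval_cornerSimplex f) (integrableOn_eval_cornerSimplex g)
  map_smul' c f := by
    simpa only [smul_eval, RingHom.id_apply, smul_eq_mul] using integral_const_mul c _

theorem simplexIntegral_apply {ι : Type*} [Fintype ι] (f : MvPolynomial ι ℝ) :
    simplexIntegral ι f = ∫ x in cornerSimplex ι, eval x f := rfl

theorem simplexIntegral_one_ne_zero {ι : Type*} [Fintype ι] : simplexIntegral ι 1 ≠ 0 := by
  simpa [simplexIntegral_apply] using (volume_cornerSimplex_pos (ι := ι)).ne'

theorem simplexIntegral_divergence_bubbleField {n : ℕ} (G : Fin n → MvPolynomial (Fin n) ℝ) :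
    simplexIntegral (Fin n) (divergence _ ℝ (bubbleField G)) = 0 := by
  rw [divergence_apply, map_sum]
  refine Finset.sum_eq_zero fun i _ ↦ integral_pderiv_eq_zero (fun x _ hx ↦ ?_) fun x _ hx ↦ ?_
  · simp [bubbleField, hx]
  · simp [bubbleField, hx]

section Tangent

variable {ι : Type*} [Fintype ι]

/-- The normal component of the vector polynomial `Φ` vanishes on every face of the reference
simplex. The face `x i = 0` has normal `-eᵢ`, and the face `∑ i, x i = 1` has a normal proportional
to `(1, …, 1)`. -/
def IsTangent (Φ : ι → MvPolynomial ι ℝ) : Prop :=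
  ∀ x ∈ cornerSimplex ι,
    (∀ i, x i = 0 → eval x (Φ i) = 0) ∧ (∑ i, x i = 1 → ∑ i, eval x (Φ i) = 0)

theorem X_sub_dvd_of_eval_update_eq_zero_on_cornerSimplex [DecidableEq ι] {i : ι}
    {r f : MvPolynomial ι ℝ}
    (hf : ∀ x ∈ cornerSimplex ι, eval (Function.update x i (eval x r)) f = 0) : X i - r ∣ f := by
  have hcard : (0 : ℝ) < (Fintype.card ι : ℝ)⁻¹ :=
    inv_pos.2 (Nat.cast_pos.2 (Fintype.card_pos_iff.2 ⟨i⟩))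
  exact X_sub_dvd_of_eval_update_eq_zero _ (fun _ ↦ Set.Icc_infinite hcard)
    fun x hx ↦ hf x (pi_Icc_subset_cornerSimplex hx)

theorem X_dvd_of_eval_eq_zero {i : ι} {f : MvPolynomial ι ℝ}
    (hf : ∀ x ∈ cornerSimplex ι, x i = 0 → eval x f = 0) : X i ∣ f := by
  classical
  rw [← sub_zero (X i)]
  refine X_sub_dvd_of_eval_update_eq_zero_on_cornerSimplex fun x hx ↦ ?_
  rw [map_zero]
  exact hf _ (update_zero_mem_cornerSimplex hx i) (Function.update_self ..)

theorem originCoord_dvd_of_eval_eq_zero {f : MvPolynomial ι ℝ}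
    (hf : ∀ x ∈ cornerSimplex ι, ∑ i, x i = 1 → eval x f = 0) : originCoord ι ℝ ∣ f := by
  classical
  cases isEmpty_or_nonempty ι with
  | inl _ => simp [originCoord]
  | inr hι =>
    obtain ⟨i⟩ := hι
    have horigin : X i - (1 - ∑ j ∈ Finset.univ.erase i, X j) = -originCoord ι ℝ := by
      rw [originCoord, ← Finset.add_sum_erase _ _ (Finset.mem_univ i)]
      ring
    rw [← neg_dvd, ← horigin]
    refine X_sub_dvd_of_eval_update_eq_zero_on_cornerSimplex fun x hx ↦ ?_
    simp only [map_sub, map_one, map_sum, eval_X]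
    exact hf _ (update_one_sub_sum_erase_mem_cornerSimplex hx i) (sum_update_one_sub_sum_erase x i)

theorem isTangent_iff_dvd {Φ : ι → MvPolynomial ι ℝ} :
    IsTangent Φ ↔ (∀ i, X i ∣ Φ i) ∧ originCoord ι ℝ ∣ ∑ i, Φ i := by
  constructor
  · refine fun h ↦ ⟨fun i ↦ X_dvd_of_eval_eq_zero fun x hx ↦ (h x hx).1 i,
      originCoord_dvd_of_eval_eq_zero fun x hx hsum ↦ ?_⟩
    rw [map_sum, (h x hx).2 hsum]
  · rintro ⟨hX, hsum⟩ x -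
    refine ⟨fun i hi ↦ ?_, fun hx ↦ ?_⟩
    · obtain ⟨ψ, hψ⟩ := hX i
      simp [hψ, hi]
    · obtain ⟨χ, hχ⟩ := hsum
      simp [← map_sum, hχ, hx]

/-- The space `Σ` of vector polynomials of degree at most `p` whose normal component vanishes on the
boundary of the reference simplex. -/
def tangentFields (ι : Type*) [Fintype ι] (p : ℕ) : Submodule ℝ (ι → MvPolynomial ι ℝ) where
  carrier := {Φ | (∀ i, (Φ i).totalDegree ≤ p) ∧ IsTangent Φ}
  zero_mem' := by simp [IsTangent]
  add_mem' := by
    rintro Φ Ψ ⟨hΦ, hΦt⟩ ⟨hΨ, hΨt⟩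
    refine ⟨fun i ↦ (totalDegree_add _ _).trans (max_le (hΦ i) (hΨ i)), fun x hx ↦ ?_⟩
    obtain ⟨hΦ0, hΦ1⟩ := hΦt x hx
    obtain ⟨hΨ0, hΨ1⟩ := hΨt x hx
    refine ⟨fun i hi ↦ ?_, fun hsum ↦ ?_⟩
    · simp [hΦ0 i hi, hΨ0 i hi]
    · simp [Finset.sum_add_distrib, hΦ1 hsum, hΨ1 hsum]
  smul_mem' := by
    rintro c Φ ⟨hΦ, hΦt⟩
    refine ⟨fun i ↦ (totalDegree_smul_le _ _).trans (hΦ i),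
      fun x hx ↦ ⟨fun i hi ↦ ?_, fun hsum ↦ ?_⟩⟩
    · simp [(hΦt x hx).1 i hi]
    · simp [← Finset.mul_sum, (hΦt x hx).2 hsum]

theorem mem_tangentFields {p : ℕ} {Φ : ι → MvPolynomial ι ℝ} :
    Φ ∈ tangentFields ι p ↔ (∀ i, (Φ i).totalDegree ≤ p) ∧ IsTangent Φ := Iff.rfl

theorem single_mem_tangentFields [DecidableEq ι] {d : ℕ} {a : ι →₀ ℕ} (ha : a.degree < d) (i : ι) :
    Pi.single i (originCoord ι ℝ * (X i * monomial a 1)) ∈ tangentFields ι (d + 1) := by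
  refine mem_tangentFields.2 ⟨fun j ↦ ?_, isTangent_iff_dvd.2 ⟨fun j ↦ ?_, ?_⟩⟩
  · obtain rfl | hj := eq_or_ne j i
    · rw [Pi.single_eq_same]
      have hmonomial : (monomial a (1 : ℝ)).totalDegree = a.degree :=
        totalDegree_monomial a one_ne_zero
      have horigin := totalDegree_originCoord_le (σ := ι) (R := ℝ)
      have hbubble := totalDegree_mul (originCoord ι ℝ) (X j * monomial a 1)
      have hX := totalDegree_mul (X j : MvPolynomial ι ℝ) (monomial a 1)
      rw [totalDegree_X] at hX
      omega
    · simp [hj]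
  · obtain rfl | hj := eq_or_ne j i
    · simpa using (dvd_mul_right _ _).mul_left _
    · simp [hj]
  · simp

theorem restrictTotalDegree_le_map_divergence_sup_span_one (d : ℕ) :
    restrictTotalDegree ι ℝ d ≤
      (tangentFields ι (d + 1)).map (divergence ι ℝ) ⊔ Submodule.span ℝ {1} := by
  classical
  rw [restrictTotalDegree, restrictSupport_eq_span, Submodule.span_le]
  rintro _ ⟨a, ha, rfl⟩
  refine monomial_mem_of_pderiv_bubble_mem (d := d)
    (Submodule.mem_sup_right (Submodule.mem_span_singleton_self 1)) (fun b i hb ↦ ?_) a ha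
  refine Submodule.mem_sup_left ⟨_, single_mem_tangentFields hb i, ?_⟩
  simp [divergence_apply, Pi.single_apply, apply_ite]

end Tangent

theorem lam_zero (x : Fin 3 → ℝ) : lam 0 x = 1 - ∑ i, x i := by
  simp [lam, Fin.sum_univ_three, sub_sub]

theorem lam_succ (i : Fin 3) (x : Fin 3 → ℝ) : lam i.succ x = x i := by
  fin_cases i <;> rfl

theorem Ktet_eq_cornerSimplex : Ktet = cornerSimplex (Fin 3) := by
  ext x
  simp [Ktet, cornerSimplex, Fin.forall_fin_succ (n := 3), lam_zero, lam_succ, and_comm]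

theorem sum_mul_normalK_zero_eq_zero_iff (v : Fin 3 → ℝ) :
    ∑ i, v i * normalK 0 i = 0 ↔ ∑ i, v i = 0 := by
  have hnormal (i : Fin 3) : normalK 0 i = (√3)⁻¹ := one_div _
  simp [hnormal, ← Finset.sum_mul]

theorem sum_mul_normalK_succ (i : Fin 3) (v : Fin 3 → ℝ) :
    ∑ j, v j * normalK i.succ j = -v i := by
  fin_cases i <;> simp [normalK, Fin.sum_univ_three]

theorem normalVanish_iff_isTangent {Φ : Fin 3 → MvPolynomial (Fin 3) ℝ} :
    normalVanish Φ ↔ IsTangent Φ := by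
  simp only [normalVanish, IsTangent, faceK, Set.mem_ofPred_eq, and_imp, Ktet_eq_cornerSimplex,
    Fin.forall_fin_succ (n := 3), lam_zero, lam_succ, sum_mul_normalK_zero_eq_zero_iff,
    sum_mul_normalK_succ, neg_eq_zero, sub_eq_zero, eq_comm (a := (1 : ℝ))]
  exact ⟨fun h x hx ↦ ⟨fun i ↦ h.2 i x hx, h.1 x hx⟩,
    fun h ↦ ⟨fun x hx ↦ (h x hx).2, fun i x hx ↦ (h x hx).1 i⟩⟩

theorem div_interior_space_eq_mean_zero_general (n d : ℕ) :
    (tangentFields (Fin n) (d + 1)).map (divergence (Fin n) ℝ) =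
      restrictTotalDegree (Fin n) ℝ d ⊓ LinearMap.ker (simplexIntegral (Fin n)) := by
  have hle : (tangentFields (Fin n) (d + 1)).map (divergence (Fin n) ℝ) ≤
      restrictTotalDegree (Fin n) ℝ d ⊓ LinearMap.ker (simplexIntegral (Fin n)) := by
    rintro _ ⟨Φ, ⟨hdeg, htan⟩, rfl⟩
    obtain ⟨hX, hsum⟩ := isTangent_iff_dvd.1 htan
    obtain ⟨G, hG⟩ := exists_divergence_eq_divergence_bubbleField hX hsum
    refine ⟨(mem_restrictTotalDegree _ _ _).2 ?_, ?_⟩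
    · rw [divergence_apply]
      exact totalDegree_finsetSum_le fun i _ ↦
        (totalDegree_pderiv_le i _).trans (Nat.sub_le_of_le_add (hdeg i))
    · rw [SetLike.mem_coe, LinearMap.mem_ker, hG, simplexIntegral_divergence_bubbleField]
  refine le_antisymm hle fun q ⟨hdeg, hmean⟩ ↦ ?_
  obtain ⟨r, hr, s, hs, rfl⟩ :=
    Submodule.mem_sup.1 (restrictTotalDegree_le_map_divergence_sup_span_one d hdeg)
  obtain ⟨c, rfl⟩ := Submodule.mem_span_singleton.1 hs
  have hc : c = 0 := by
    simpa [LinearMap.mem_ker.1 (hle hr).2, simplexIntegral_one_ne_zero] using hmean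
  simpa [hc] using hr

/-- div {Φ ∈ (P_p)³ : Φ·n = 0 on ∂K} = {q ∈ P_{p-1} : ∫_K q dx = 0}. -/
theorem div_interior_space_eq_mean_zero (p : ℕ) (hp : 1 ≤ p) :
    {q : MvPolynomial (Fin 3) ℝ | ∃ Φ : Fin 3 → MvPolynomial (Fin 3) ℝ,
        (∀ i, (Φ i).totalDegree ≤ p) ∧ normalVanish Φ ∧ q = divP Φ} =
    {q : MvPolynomial (Fin 3) ℝ |
        q.totalDegree ≤ p - 1 ∧ ∫ x in Ktet, MvPolynomial.eval x q = 0} := by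
  obtain ⟨d, rfl⟩ := Nat.exists_eq_add_of_le' hp
  ext q
  simpa [Ktet_eq_cornerSimplex, normalVanish_iff_isTangent, mem_tangentFields,
    mem_restrictTotalDegree, simplexIntegral_apply, divP, divergence_apply, and_assoc, eq_comm]
    using SetLike.ext_iff.1 (div_interior_space_eq_mean_zero_general 3 d) q
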